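/- arXiv:1410.3166 — 2 statements merged into one kernel-verified Lean document; each statement's English description precedes it below -/
import Mathlib

section
/- Assume r ≥ 2. If (d_0,…,d_L) ∈ ℕ^{L+1} satisfies d_l ≤ r·d_{l-1} and d_{l-1} ≤ r·d_l for every l ∈ {1,…,L}, then there exists a finite-dimensional Λ-module M with rad(M) = (d_0,…,d_L) and socseq(M) = (d_L,…,d_0). -/
noncomputable section

/-- The relation on the free algebra killing all products of `L+1` generators. -/
def TruncRel (K : Type*) [Field K] (r L : ℕ) :
    FreeAlgebra K (Fin r) → FreeAlgebra K (Fin r) → Prop := fun a b =>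
  (∃ f : Fin (L + 1) → Fin r, a = (List.ofFn fun j => FreeAlgebra.ι K (f j)).prod) ∧ b = 0

/-- The local truncated path algebra with `r` loops and Loewy length `L+1`:
the quotient of `K⟨X_1,…,X_r⟩` by the two-sided ideal generated by all products
of `L+1` generators. -/
def TruncAlg (K : Type*) [Field K] (r L : ℕ) : Type _ := RingQuot (TruncRel K r L)

instance (K : Type*) [Field K] (r L : ℕ) : Ring (TruncAlg K r L) :=
  inferInstanceAs (Ring (RingQuot _))

instance (K : Type*) [Field K] (r L : ℕ) : Algebra K (TruncAlg K r L) :=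
  inferInstanceAs (Algebra K (RingQuot _))

/-- The images of the generators `X i` in the truncated algebra. -/
def gen (K : Type*) [Field K] (r L : ℕ) (i : Fin r) : TruncAlg K r L :=
  RingQuot.mkAlgHom K (TruncRel K r L) (FreeAlgebra.ι K i)

/-- The two-sided ideal `J` of `Λ` generated by the images of `X_1,…,X_r`,
realized as a `K`-submodule of `Λ`. -/
def Jrad (K : Type*) [Field K] (r L : ℕ) : Submodule K (TruncAlg K r L) :=
  ⊤ * Submodule.span K (Set.range (gen K r L)) * ⊤

/-- `J^l M`, the submodule of `M` given by the action of `J^l`. -/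
def jpow (K : Type*) [Field K] (r L : ℕ) (M : Type*) [AddCommGroup M] [Module K M]
    [Module (TruncAlg K r L) M] [IsScalarTower K (TruncAlg K r L) M] (l : ℕ) :
    Submodule (TruncAlg K r L) M :=
  Submodule.span (TruncAlg K r L)
    {x : M | ∃ a ∈ (Jrad K r L ^ l : Submodule K (TruncAlg K r L)), ∃ m : M, x = a • m}

/-- The socle of a module: the supremum of all simple submodules. -/
def socle (R N : Type*) [Ring R] [AddCommGroup N] [Module R N] : Submodule R N :=
  sSup {p : Submodule R N | IsSimpleModule R ↥p}

/-- The socle series: `socSeries R M l` is `soc_{l-1} M`, so `socSeries R M 0 = soc_{-1} M = ⊥`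
and `socSeries R M (l+1) = soc_l M` is the preimage in `M` of `soc (M / soc_{l-1} M)`. -/
def socSeries (R M : Type*) [Ring R] [AddCommGroup M] [Module R M] : ℕ → Submodule R M
  | 0 => ⊥
  | l + 1 => Submodule.comap (socSeries R M l).mkQ (socle R (M ⧸ socSeries R M l))

/-- Dimension of the subquotient `q / (p ⊓ q)`; for `p ≤ q` this is `dim (q/p)`. -/
def quotDim (K M : Type*) [Field K] [AddCommGroup M] [Module K M]
    (p q : Submodule K M) : ℕ :=
  Module.finrank K (↥q ⧸ Submodule.comap q.subtype p)

/-- The radical layering `rad(M) = (dim_K J^l M / J^{l+1} M)_{l=0,…,L}`. -/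
def radLayering (K : Type*) [Field K] (r L : ℕ) (M : Type*) [AddCommGroup M] [Module K M]
    [Module (TruncAlg K r L) M] [IsScalarTower K (TruncAlg K r L) M] : Fin (L + 1) → ℕ :=
  fun l => quotDim K M ((jpow K r L M ((l : ℕ) + 1)).restrictScalars K)
    ((jpow K r L M (l : ℕ)).restrictScalars K)

/-- The socle layering `socseq(M) = (dim_K soc_l M / soc_{l-1} M)_{l=0,…,L}`. -/
def socLayering (K : Type*) [Field K] (r L : ℕ) (M : Type*) [AddCommGroup M] [Module K M]
    [Module (TruncAlg K r L) M] [IsScalarTower K (TruncAlg K r L) M] : Fin (L + 1) → ℕ :=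
  fun l => quotDim K M ((socSeries (TruncAlg K r L) M (l : ℕ)).restrictScalars K)
    ((socSeries (TruncAlg K r L) M ((l : ℕ) + 1)).restrictScalars K)

/-- The dominance order on `ℕ^{L+1}`: `a ≼ b` iff all partial sums satisfy `≤`. -/
def DomLE (L : ℕ) (a b : Fin (L + 1) → ℕ) : Prop :=
  ∀ l : Fin (L + 1), ∑ j ∈ Finset.Iic l, a j ≤ ∑ j ∈ Finset.Iic l, b j

/-- `reverse (a_0, …, a_L) = (a_L, …, a_0)`. -/
def revTuple (L : ℕ) (a : Fin (L + 1) → ℕ) : Fin (L + 1) → ℕ := fun l => a l.rev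

section helpers

variable {K : Type} [Field K] {r L : ℕ}

theorem gen_induction {P : TruncAlg K r L → Prop}
    (hs : ∀ c : K, P (algebraMap K _ c)) (hg : ∀ i, P (gen K r L i))
    (ha : ∀ a b, P a → P b → P (a + b)) (hm : ∀ a b, P a → P b → P (a * b))
    (a : TruncAlg K r L) : P a := by
  obtain ⟨x, rfl⟩ := RingQuot.mkAlgHom_surjective K (TruncRel K r L) a
  induction x using FreeAlgebra.induction with
  | grade0 c => 
    have := hs c
    rw [AlgHom.commutes]; exact this
  | grade1 i => exact hg i
  | mul a b h1 h2 => rw [map_mul]; exact hm _ _ h1 h2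
  | add a b h1 h2 => rw [map_add]; exact ha _ _ h1 h2

variable {N : Type} [AddCommGroup N] [Module K N]
    [Module (TruncAlg K r L) N] [IsScalarTower K (TruncAlg K r L) N]

theorem smul_scalar {x : N} (hx : ∀ i, gen K r L i • x = 0) (a : TruncAlg K r L) :
    ∃ c : K, a • x = c • x := by
  induction a using gen_induction with
  | hs c => exact ⟨c, by rw [algebraMap_smul]⟩
  | hg i => exact ⟨0, by rw [hx, zero_smul]⟩
  | ha a b h1 h2 =>
    obtain ⟨c, h1⟩ := h1
    obtain ⟨d, h2⟩ := h2
    exact ⟨c + d, by rw [add_smul, add_smul, h1, h2]⟩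
  | hm a b h1 h2 =>
    obtain ⟨c, h1⟩ := h1
    obtain ⟨d, h2⟩ := h2
    refine ⟨d * c, ?_⟩
    rw [mul_smul, h2, ← algebraMap_smul (TruncAlg K r L) d x, ← mul_smul,
      ← Algebra.commutes, mul_smul, h1, algebraMap_smul, mul_smul]

theorem mem_socle_of_killed {x : N} (hx : ∀ i, gen K r L i • x = 0) :
    x ∈ socle (TruncAlg K r L) N := by
  by_cases h0 : x = 0
  · rw [h0]; exact zero_mem _
  have : IsSimpleModule (TruncAlg K r L) ↥(Submodule.span (TruncAlg K r L) {x}) := by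
    rw [isSimpleModule_iff_isAtom]
    refine ⟨?_, ?_⟩
    · simpa using h0
    · intro S hS
      by_contra hne
      obtain ⟨y, hy, hy0⟩ := S.exists_mem_ne_zero_of_ne_bot hne
      obtain ⟨a, rfl⟩ := Submodule.mem_span_singleton.1 (hS.le hy)
      obtain ⟨c, hc⟩ := smul_scalar hx a
      rw [hc] at hy hy0
      have hc0 : c ≠ 0 := by rintro rfl; simp at hy0
      apply hS.not_ge
      rw [Submodule.span_singleton_le_iff_mem]
      have := S.smul_mem (algebraMap K (TruncAlg K r L) c⁻¹) hy
      rwa [algebraMap_smul, smul_smul, inv_mul_cancel₀ hc0, one_smul] at this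
  exact (le_sSup (a := Submodule.span (TruncAlg K r L) {x}) this)
    (Submodule.mem_span_singleton_self x)

/-- elements killed by all generators -/
def killed (K : Type) [Field K] (r L : ℕ) (N : Type) [AddCommGroup N] [Module K N]
    [Module (TruncAlg K r L) N] [IsScalarTower K (TruncAlg K r L) N] :
    Submodule (TruncAlg K r L) N where
  carrier := {x | ∀ i, gen K r L i • x = 0}
  zero_mem' := fun i => smul_zero _
  add_mem' := fun {a b} ha hb i => by rw [smul_add, ha i, hb i, add_zero]
  smul_mem' := fun a x hx i => by
    obtain ⟨c, hc⟩ := smul_scalar hx a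
    rw [hc, ← algebraMap_smul (TruncAlg K r L) c x, ← mul_smul,
      ← Algebra.commutes, mul_smul, hx i, smul_zero]

theorem socle_eq_killed (F : ℕ → Set N) (n : ℕ) (h0 : ∀ x, x ∈ F 0)
    (hs : ∀ k x i, x ∈ F k → gen K r L i • x ∈ F (k + 1)) (hn : ∀ x ∈ F n, x = 0) :
    socle (TruncAlg K r L) N = killed K r L N := by
  apply le_antisymm
  · apply sSup_le
    intro S hS
    have hS : IsSimpleModule (TruncAlg K r L) ↥S := hS
    rw [isSimpleModule_iff_isAtom] at hS
    by_contra hle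
    have hb : S ⊓ killed K r L N = ⊥ := by
      apply hS.2
      exact lt_of_le_of_ne inf_le_left (fun h => hle (inf_eq_left.1 h))
    have key : ∀ k, ∃ x ∈ S, x ≠ 0 ∧ x ∈ F k := by
      intro k
      induction k with
      | zero =>
        obtain ⟨y, hy, hy0⟩ := S.exists_mem_ne_zero_of_ne_bot hS.1
        exact ⟨y, hy, hy0, h0 y⟩
      | succ k ih =>
        obtain ⟨x, hx, hx0, hxF⟩ := ih
        have : ¬ ∀ i, gen K r L i • x = 0 := by
          intro h
          have : x ∈ S ⊓ killed K r L N := ⟨hx, h⟩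
          rw [hb] at this
          exact hx0 this
        push Not at this
        obtain ⟨i, hi⟩ := this
        exact ⟨_, S.smul_mem _ hx, hi, hs _ _ _ hxF⟩
    obtain ⟨x, -, hx0, hxF⟩ := key n
    exact hx0 (hn x hxF)
  · intro x hx
    exact mem_socle_of_killed hx

end helpers

section graded

variable {K : Type} [Field K] {r L : ℕ} {ι : Type} [Fintype ι] [DecidableEq ι]
  [Module (TruncAlg K r L) (ι → K)] [IsScalarTower K (TruncAlg K r L) (ι → K)]

theorem smul_filt (lev : ι → ℕ)
    (hG : ∀ i n (v : ι → K), (∀ p, lev p < n → v p = 0) →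
      ∀ p, lev p < n + 1 → (gen K r L i • v) p = 0)
    (n : ℕ) (a : TruncAlg K r L) : ∀ (v : ι → K), (∀ p, lev p < n → v p = 0) →
      ∀ p, lev p < n → (a • v) p = 0 := by
  induction a using gen_induction with
  | hs c => intro v hv p hp; rw [algebraMap_smul, Pi.smul_apply, hv p hp, smul_zero]
  | hg i => intro v hv p hp; exact hG i n v hv p (by omega)
  | ha a b h1 h2 =>
    intro v hv p hp
    rw [add_smul, Pi.add_apply, h1 v hv p hp, h2 v hv p hp, add_zero]
  | hm a b h1 h2 =>
    intro v hv p hp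
    rw [mul_smul]
    exact h1 _ (h2 v hv) p hp

/-- the level filtration -/
def Filt (lev : ι → ℕ)
    (hG : ∀ i n (v : ι → K), (∀ p, lev p < n → v p = 0) →
      ∀ p, lev p < n + 1 → (gen K r L i • v) p = 0) (n : ℕ) :
    Submodule (TruncAlg K r L) (ι → K) where
  carrier := {v | ∀ p, lev p < n → v p = 0}
  zero_mem' := fun p _ => rfl
  add_mem' := fun {a b} ha hb p hp => by rw [Pi.add_apply, ha p hp, hb p hp, add_zero]
  smul_mem' := fun a v hv => smul_filt lev hG n a v hv

variable (lev : ι → ℕ)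
    (hG : ∀ i n (v : ι → K), (∀ p, lev p < n → v p = 0) →
      ∀ p, lev p < n + 1 → (gen K r L i • v) p = 0)

theorem J_smul {n : ℕ} {a : TruncAlg K r L} (ha : a ∈ Jrad K r L) {v : ι → K}
    (hv : v ∈ Filt lev hG n) : a • v ∈ Filt lev hG (n + 1) := by
  unfold Jrad at ha
  induction ha using Submodule.mul_induction_on' with
  | mem_mul_mem x hx y _ =>
    rw [mul_smul]
    have hy := (Filt lev hG n).smul_mem y hv
    generalize y • v = w at hy
    induction hx using Submodule.mul_induction_on' with
    | mem_mul_mem x _ z hz =>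
      rw [mul_smul]
      apply Submodule.smul_mem
      induction hz using Submodule.span_induction with
      | mem z h => obtain ⟨i, rfl⟩ := h; exact hG i n w hy
      | zero => rw [zero_smul]; exact zero_mem _
      | add a b _ _ h1 h2 => rw [add_smul]; exact add_mem h1 h2
      | smul c a _ h =>
        rw [smul_assoc, ← algebraMap_smul (TruncAlg K r L)]; exact Submodule.smul_mem _ _ h
    | add x _ y _ h1 h2 => rw [add_smul]; exact add_mem h1 h2
  | add x _ y _ h1 h2 => rw [add_smul]; exact add_mem h1 h2

theorem Jpow_smul (n : ℕ) : ∀ {a : TruncAlg K r L} (_ : a ∈ Jrad K r L ^ n) (v : ι → K),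
    a • v ∈ Filt lev hG n := by
  induction n with
  | zero => intro a _ v p hp; omega
  | succ n ih =>
    intro a ha v
    rw [pow_succ'] at ha
    induction ha using Submodule.mul_induction_on' with
    | mem_mul_mem x hx y hy => rw [mul_smul]; exact J_smul lev hG hx (ih hy v)
    | add x _ y _ h1 h2 => rw [add_smul]; exact add_mem h1 h2

theorem gen_mem_J (i : Fin r) : gen K r L i ∈ Jrad K r L := by
  have : gen K r L i = 1 * gen K r L i * 1 := by simp
  rw [this]
  exact Submodule.mul_mem_mul (Submodule.mul_mem_mul trivial
    (Submodule.subset_span ⟨i, rfl⟩)) trivial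

theorem single_mem
    (hS : ∀ p, 0 < lev p → ∃ i q, lev p = lev q + 1 ∧
      gen K r L i • (Pi.single q 1 : ι → K) = Pi.single p 1) (n : ℕ) :
    ∀ p, n ≤ lev p → ∃ a ∈ Jrad K r L ^ n, ∃ m : ι → K, (Pi.single p 1 : ι → K) = a • m := by
  induction n with
  | zero => 
    intro p _
    exact ⟨1, by rw [pow_zero]; exact Submodule.one_le.1 le_rfl, _, (one_smul _ _).symm⟩
  | succ n ih =>
    intro p hp
    obtain ⟨i, q, hq, h⟩ := hS p (by omega)
    obtain ⟨a, ha, m, hm⟩ := ih q (by omega)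
    refine ⟨gen K r L i * a, ?_, m, ?_⟩
    · rw [pow_succ']; exact Submodule.mul_mem_mul (gen_mem_J i) ha
    · rw [mul_smul, ← hm, h]

theorem jpow_eq
    (hS : ∀ p, 0 < lev p → ∃ i q, lev p = lev q + 1 ∧
      gen K r L i • (Pi.single q 1 : ι → K) = Pi.single p 1) (n : ℕ) :
    jpow K r L (ι → K) n = Filt lev hG n := by
  apply le_antisymm
  · unfold jpow
    rw [Submodule.span_le]
    rintro _ ⟨a, ha, m, rfl⟩
    exact Jpow_smul lev hG n ha m
  · intro v hv
    rw [← Finset.univ_sum_single v]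
    apply Submodule.sum_mem
    intro p _
    by_cases hp : lev p < n
    · rw [hv p hp, Pi.single_zero]; exact zero_mem _
    · obtain ⟨a, ha, m, hm⟩ := single_mem lev hS n p (by omega)
      have : (Pi.single p (v p) : ι → K) =
          (algebraMap K (TruncAlg K r L) (v p)) • (Pi.single p 1 : ι → K) := by
        rw [algebraMap_smul, ← Pi.single_smul, smul_eq_mul, mul_one]
      rw [this]
      exact Submodule.smul_mem _ _ (Submodule.subset_span ⟨a, ha, m, hm⟩)

theorem soc_eq (hlev : ∀ p, lev p ≤ L)
    (hI : ∀ q, lev q < L → ∃ i p, lev p = lev q + 1 ∧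
      ∀ v : ι → K, (gen K r L i • v) p = v q) (n : ℕ) (hn : n ≤ L + 1) :
    socSeries (TruncAlg K r L) (ι → K) n = Filt lev hG (L + 1 - n) := by
  induction n with
  | zero =>
    symm
    rw [socSeries, eq_bot_iff]
    intro v hv
    rw [Submodule.mem_bot]
    funext p
    exact hv p (by have := hlev p; omega)
  | succ n ih =>
    rw [socSeries, ih (by omega)]
    obtain ⟨m, hm⟩ : ∃ m, m + n = L := ⟨L - n, by omega⟩
    have e1 : L + 1 - n = m + 1 := by omega
    have e2 : L + 1 - (n + 1) = m := by omega
    rw [e1, e2]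
    rw [socle_eq_killed (K := K) (fun k => (Filt lev hG (m+1)).mkQ '' (Filt lev hG k : Set (ι → K)))
      (L + 1)]
    · ext v
      constructor
      · intro h q hq
        obtain ⟨i, p, hp, hv⟩ := hI q (by omega)
        have h := h i
        rw [← map_smul, Submodule.mkQ_apply, Submodule.Quotient.mk_eq_zero] at h
        rw [← hv v]
        exact h p (by omega)
      · intro h i
        rw [← map_smul, Submodule.mkQ_apply, Submodule.Quotient.mk_eq_zero]
        exact hG i m v h
    · intro x
      obtain ⟨v, rfl⟩ := Submodule.mkQ_surjective _ x
      exact ⟨v, fun p hp => by omega, rfl⟩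
    · rintro k _ i ⟨v, hv, rfl⟩
      exact ⟨gen K r L i • v, hG i k v hv, by rw [map_smul]⟩
    · rintro _ ⟨v, hv, rfl⟩
      have : v = 0 := by
        funext p
        exact hv p (by have := hlev p; omega)
      rw [this, map_zero]

theorem quotDim_filt (n : ℕ) :
    quotDim K (ι → K) ((Filt lev hG (n + 1)).restrictScalars K)
      ((Filt lev hG n).restrictScalars K) = Fintype.card {p // lev p = n} := by
  unfold quotDim
  let f : ((Filt lev hG n).restrictScalars K) →ₗ[K] ({p // lev p = n} → K) :=
    (LinearMap.funLeft K K (Subtype.val : {p // lev p = n} → ι)) ∘ₗ Submodule.subtype _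
  have hk : LinearMap.ker f = Submodule.comap
      ((Filt lev hG n).restrictScalars K).subtype ((Filt lev hG (n + 1)).restrictScalars K) := by
    ext ⟨v, hv⟩
    constructor
    · intro h p hp
      rcases Nat.lt_succ_iff_lt_or_eq.1 hp with h1 | h1
      · exact hv p h1
      · exact congrFun h ⟨p, h1⟩
    · intro h
      funext ⟨p, hp⟩
      exact h p (by omega)
  have hs : Function.Surjective f := by
    intro w
    refine ⟨⟨fun p => if h : lev p = n then w ⟨p, h⟩ else 0, ?_⟩, ?_⟩
    · intro p hp
      exact dif_neg (by omega)
    · funext ⟨p, hp⟩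
      exact dif_pos hp
  rw [← hk, (f.quotKerEquivOfSurjective hs).finrank_eq, Module.finrank_fintype_fun_eq_card]

end graded

/-- partial bijections -/
def srel (r L : ℕ) (dv : Fin (L + 1) → ℕ) (i : Fin r) (q p : Σ l : Fin (L + 1), Fin (dv l)) :
    Prop :=
  (p.1 : ℕ) = q.1 + 1 ∧ if dv q.1 ≤ dv p.1 then (p.2 : ℕ) = i * dv q.1 + q.2
    else (q.2 : ℕ) = i * dv p.1 + p.2

theorem srel_unique_right {r L : ℕ} {dv : Fin (L + 1) → ℕ} {i : Fin r}
    {q p p' : Σ l : Fin (L + 1), Fin (dv l)} (h : srel r L dv i q p) (h' : srel r L dv i q p') :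
    p' = p := by
  obtain ⟨l, j⟩ := p
  obtain ⟨l', j'⟩ := p'
  obtain ⟨h1, h2⟩ := h
  obtain ⟨h1', h2'⟩ := h'
  obtain rfl : l = l' := Fin.ext (h1.trans h1'.symm)
  simp only at h2 h2'
  congr 1
  apply Fin.ext
  split_ifs at h2 h2' <;> omega

theorem srel_unique_left {r L : ℕ} {dv : Fin (L + 1) → ℕ} {i : Fin r}
    {q q' p : Σ l : Fin (L + 1), Fin (dv l)} (h : srel r L dv i q p) (h' : srel r L dv i q' p) :
    q' = q := by
  obtain ⟨l, j⟩ := q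
  obtain ⟨l', j'⟩ := q'
  obtain ⟨h1, h2⟩ := h
  obtain ⟨h1', h2'⟩ := h'
  obtain rfl : l = l' := Fin.ext (by simp only at h1 h1'; omega)
  simp only at h2 h2'
  congr 1
  apply Fin.ext
  split_ifs at h2 h2' <;> omega

theorem srel_exists_left {r L : ℕ} (hr : 2 ≤ r) {dv : Fin (L + 1) → ℕ}
    (hdv : ∀ l : Fin L, dv l.succ ≤ r * dv l.castSucc ∧ dv l.castSucc ≤ r * dv l.succ)
    (p : Σ l : Fin (L + 1), Fin (dv l)) (hp : 0 < (p.1 : ℕ)) : ∃ i q, srel r L dv i q p := by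
  obtain ⟨l, k⟩ := p
  obtain ⟨m, rfl⟩ := Fin.exists_succ_eq.2 (show l ≠ 0 by rintro rfl; simp at hp)
  obtain ⟨h1, h2⟩ := hdv m
  have hk := k.2
  by_cases h : dv m.castSucc ≤ dv m.succ
  · have ha : 0 < dv m.castSucc := by
      rcases Nat.eq_zero_or_pos (dv m.castSucc) with h0 | h0
      · rw [h0] at h1; omega
      · exact h0
    refine ⟨⟨k / dv m.castSucc, ?_⟩, ⟨m.castSucc, ⟨k % dv m.castSucc, Nat.mod_lt _ ha⟩⟩, ?_, ?_⟩
    · rw [Nat.div_lt_iff_lt_mul ha]; omega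
    · simp
    · simp only [if_pos h]; exact (Nat.div_add_mod' _ _).symm
  · refine ⟨⟨0, by omega⟩, ⟨m.castSucc, ⟨k, by omega⟩⟩, ?_, ?_⟩
    · simp
    · simp only [if_neg h]; simp

theorem srel_exists_right {r L : ℕ} (hr : 2 ≤ r) {dv : Fin (L + 1) → ℕ}
    (hdv : ∀ l : Fin L, dv l.succ ≤ r * dv l.castSucc ∧ dv l.castSucc ≤ r * dv l.succ)
    (q : Σ l : Fin (L + 1), Fin (dv l)) (hq : (q.1 : ℕ) < L) : ∃ i p, srel r L dv i q p := by
  obtain ⟨l, k⟩ := q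
  obtain ⟨m, rfl⟩ : ∃ m : Fin L, m.castSucc = l := ⟨⟨l, hq⟩, rfl⟩
  obtain ⟨h1, h2⟩ := hdv m
  have hk := k.2
  by_cases h : dv m.castSucc ≤ dv m.succ
  · refine ⟨⟨0, by omega⟩, ⟨m.succ, ⟨k, by omega⟩⟩, ?_, ?_⟩
    · simp
    · simp only [if_pos h]; simp
  · have ha : 0 < dv m.succ := by
      rcases Nat.eq_zero_or_pos (dv m.succ) with h0 | h0
      · rw [h0] at h2; omega
      · exact h0
    refine ⟨⟨k / dv m.succ, ?_⟩, ⟨m.succ, ⟨k % dv m.succ, Nat.mod_lt _ ha⟩⟩, ?_, ?_⟩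
    · rw [Nat.div_lt_iff_lt_mul ha]; omega
    · simp
    · simp only [if_neg h]; exact (Nat.div_add_mod' _ _).symm

open Classical in
/-- generator action -/
def Xop (K : Type) [Field K] (r L : ℕ) (dv : Fin (L + 1) → ℕ) (i : Fin r) :
    Module.End K ((Σ l : Fin (L + 1), Fin (dv l)) → K) where
  toFun v p := ∑ q, if srel r L dv i q p then v q else 0
  map_add' v w := by
    funext p
    simp only [Pi.add_apply, ← Finset.sum_add_distrib]
    refine Finset.sum_congr rfl fun q _ => ?_
    split_ifs <;> simp
  map_smul' c v := by
    funext p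
    simp [Finset.mul_sum]

theorem Xop_apply_of {K : Type} [Field K] {r L : ℕ} {dv : Fin (L + 1) → ℕ} {i : Fin r}
    {q p : Σ l : Fin (L + 1), Fin (dv l)} (h : srel r L dv i q p)
    (v : (Σ l : Fin (L + 1), Fin (dv l)) → K) : Xop K r L dv i v p = v q := by
  classical
  change (∑ q, if srel r L dv i q p then v q else 0) = _
  rw [Finset.sum_eq_single q]
  · rw [if_pos h]
  · intro q' _ hne
    exact if_neg fun h' => hne (srel_unique_left h h')
  · simp

theorem Xop_apply_not {K : Type} [Field K] {r L : ℕ} {dv : Fin (L + 1) → ℕ} {i : Fin r}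
    {p : Σ l : Fin (L + 1), Fin (dv l)} (h : ∀ q, ¬ srel r L dv i q p)
    (v : (Σ l : Fin (L + 1), Fin (dv l)) → K) : Xop K r L dv i v p = 0 := by
  classical
  change (∑ q, if srel r L dv i q p then v q else 0) = _
  exact Finset.sum_eq_zero fun q _ => if_neg (h q)

theorem Xop_G {K : Type} [Field K] {r L : ℕ} {dv : Fin (L + 1) → ℕ} (i : Fin r) (n : ℕ)
    (v : (Σ l : Fin (L + 1), Fin (dv l)) → K) (hv : ∀ p, (p.1 : ℕ) < n → v p = 0) :
    ∀ p, (p.1 : ℕ) < n + 1 → Xop K r L dv i v p = 0 := by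
  intro p hp
  by_cases h : ∃ q, srel r L dv i q p
  · obtain ⟨q, h⟩ := h
    rw [Xop_apply_of h]
    exact hv q (by have := h.1; omega)
  · push Not at h
    exact Xop_apply_not h v

theorem Xop_single {K : Type} [Field K] {r L : ℕ} {dv : Fin (L + 1) → ℕ} {i : Fin r}
    {q p : Σ l : Fin (L + 1), Fin (dv l)} (h : srel r L dv i q p) :
    Xop K r L dv i (Pi.single q 1) = Pi.single p 1 := by
  funext p'
  by_cases h' : ∃ q', srel r L dv i q' p'
  · obtain ⟨q', h'⟩ := h'
    rw [Xop_apply_of h']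
    by_cases e : q' = q
    · subst e
      rw [srel_unique_right h h']; simp
    · rw [Pi.single_eq_of_ne e, Pi.single_eq_of_ne]
      rintro rfl
      exact e (srel_unique_left h h')
  · push Not at h'
    rw [Xop_apply_not h', Pi.single_eq_of_ne]
    rintro rfl
    exact h' q h

/-- the representation -/
def Xrep (K : Type) [Field K] (r L : ℕ) (dv : Fin (L + 1) → ℕ) :
    TruncAlg K r L →ₐ[K] Module.End K ((Σ l : Fin (L + 1), Fin (dv l)) → K) :=
  RingQuot.liftAlgHom K ⟨FreeAlgebra.lift K (Xop K r L dv), by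
    rintro a b ⟨⟨f, rfl⟩, rfl⟩
    rw [map_zero, map_list_prod, List.map_ofFn]
    have key : ∀ (l : List (Fin r)) (v : (Σ l : Fin (L + 1), Fin (dv l)) → K)
        (p : Σ l : Fin (L + 1), Fin (dv l)), (p.1 : ℕ) < l.length →
        (l.map (Xop K r L dv)).prod v p = 0 := by
      intro l
      induction l with
      | nil => intro v p hp; simp at hp
      | cons i l ih =>
        intro v p hp
        rw [List.map_cons, List.prod_cons, Module.End.mul_apply]
        exact Xop_G i l.length _ (ih v) p hp
    apply LinearMap.ext
    intro v
    funext p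
    have := key (List.ofFn f) v p (by simp; omega)
    rw [List.map_ofFn] at this
    have e : (⇑(FreeAlgebra.lift K (Xop K r L dv)) ∘ fun j => FreeAlgebra.ι K (f j)) =
        Xop K r L dv ∘ f := by
      funext j
      simp
    rw [e]
    exact this⟩

theorem Xrep_gen (K : Type) [Field K] (r L : ℕ) (dv : Fin (L + 1) → ℕ) (i : Fin r) :
    Xrep K r L dv (gen K r L i) = Xop K r L dv i := by
  unfold Xrep gen
  erw [RingQuot.liftAlgHom_mkAlgHom_apply]
  simp

theorem card_lev (L : ℕ) (dv : Fin (L + 1) → ℕ) (l : Fin (L + 1)) (n : ℕ) (hn : n = l) :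
    Fintype.card {p : Σ l : Fin (L + 1), Fin (dv l) // (p.1 : ℕ) = n} = dv l := by
  subst hn
  rw [← Fintype.card_fin (dv l)]
  refine (Fintype.card_congr (Equiv.ofBijective
    (fun k : Fin (dv l) => (⟨⟨l, k⟩, rfl⟩ :
      {p : Σ l : Fin (L + 1), Fin (dv l) // (p.1 : ℕ) = l})) ⟨?_, ?_⟩)).symm
  · intro a b h
    simpa using h
  · rintro ⟨⟨l', k⟩, h⟩
    obtain rfl : l' = l := Fin.ext h
    exact ⟨k, rfl⟩

/-- For `r ≥ 2`, if `(d_0,…,d_L)` satisfies `d_l ≤ r·d_{l-1}` and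
`d_{l-1} ≤ r·d_l` for `1 ≤ l ≤ L`, then some finite-dimensional `Λ`-module `M` has
radical layering `(d_0,…,d_L)` and socle layering `(d_L,…,d_0)`. -/
theorem stmt1 (K : Type) [Field K] [IsAlgClosed K] (r L : ℕ) (hr : 2 ≤ r) (hL : 0 < L)
    (dv : Fin (L + 1) → ℕ)
    (hdv : ∀ l : Fin L, dv l.succ ≤ r * dv l.castSucc ∧ dv l.castSucc ≤ r * dv l.succ) :
    ∃ (M : Type) (_ : AddCommGroup M) (_ : Module K M)
        (_ : Module (TruncAlg K r L) M) (_ : IsScalarTower K (TruncAlg K r L) M)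
        (_ : FiniteDimensional K M),
      radLayering K r L M = dv ∧ socLayering K r L M = revTuple L dv := by
  classical
  letI inst : Module (TruncAlg K r L) ((Σ l : Fin (L + 1), Fin (dv l)) → K) :=
    Module.compHom _ (Xrep K r L dv).toRingHom
  have hsm : ∀ (a : TruncAlg K r L) (v : (Σ l : Fin (L + 1), Fin (dv l)) → K),
    a • v = Xrep K r L dv a v := fun a v => rfl
  haveI : IsScalarTower K (TruncAlg K r L) ((Σ l : Fin (L + 1), Fin (dv l)) → K) := ⟨by
    intro c a v
    rw [hsm, hsm, map_smul]; rfl⟩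
  have hgen : ∀ i (v : (Σ l : Fin (L + 1), Fin (dv l)) → K),
      gen K r L i • v = Xop K r L dv i v := fun i v => by rw [hsm, Xrep_gen]
  let lev : (Σ l : Fin (L + 1), Fin (dv l)) → ℕ := fun p => p.1
  have hG : ∀ i n (v : (Σ l : Fin (L + 1), Fin (dv l)) → K), (∀ p, lev p < n → v p = 0) →
      ∀ p, lev p < n + 1 → (gen K r L i • v) p = 0 := by
    intro i n v hv p hp
    rw [hgen]
    exact Xop_G i n v hv p hp
  have hj := jpow_eq lev hG (by
    intro p hp
    obtain ⟨i, q, h⟩ := srel_exists_left hr hdv p hp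
    exact ⟨i, q, h.1, by rw [hgen]; exact Xop_single h⟩)
  have hs := soc_eq lev hG (fun p => Nat.lt_succ_iff.1 p.1.2) (by
    intro q hq
    obtain ⟨i, p, h⟩ := srel_exists_right hr hdv q hq
    exact ⟨i, p, h.1, fun v => by rw [hgen]; exact Xop_apply_of h v⟩)
  refine ⟨(Σ l : Fin (L + 1), Fin (dv l)) → K, inferInstance, inferInstance, inst, this,
    inferInstance, ?_, ?_⟩
  · funext l
    unfold radLayering
    rw [hj, hj, quotDim_filt]
    exact card_lev L dv l l rfl
  · funext l
    unfold socLayering revTuple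
    have hl := l.2
    rw [hs _ (by omega), hs _ (by omega)]
    have e : L + 1 - (l : ℕ) = (L + 1 - (l + 1)) + 1 := by omega
    rw [e, quotDim_filt]
    exact card_lev L dv l.rev _ (by rw [Fin.val_rev])
end
end

section
/- For any tuple (d_0,…,d_L) ∈ ℕ^{L+1}, there exists a finite-dimensional Λ-module M with rad(M) = (d_0,…,d_L) if and only if d_l ≤ r·d_{l-1} for every l ∈ {1,…,L}. -/
noncomputable section

section helper
open Submodule

def ssp (K : Type*) [Field K] (r L : ℕ) : Submodule K (TruncAlg K r L) :=
  1 ⊔ Submodule.span K (Set.range (gen K r L)) * ⊤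

lemma ssp_mul (K : Type*) [Field K] (r L : ℕ) : ssp K r L * ssp K r L ≤ ssp K r L := by
  unfold ssp
  set V := Submodule.span K (Set.range (gen K r L))
  rw [Submodule.sup_mul, one_mul]
  refine sup_le le_rfl ?_
  rw [mul_assoc]
  exact le_sup_of_le_right (mul_le_mul_right le_top _)

lemma ssp_eq_top (K : Type*) [Field K] (r L : ℕ) : ssp K r L = ⊤ := by
  rw [eq_top_iff]
  intro a _
  obtain ⟨b, rfl⟩ := RingQuot.mkAlgHom_surjective K (TruncRel K r L) a
  induction b using FreeAlgebra.induction with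
  | grade0 k =>
    rw [AlgHom.commutes]
    exact Submodule.mem_sup_left (Submodule.algebraMap_mem k)
  | grade1 i =>
    refine Submodule.mem_sup_right ?_
    have := Submodule.mul_mem_mul (M := Submodule.span K (Set.range (gen K r L)))
      (N := ⊤) (Submodule.subset_span ⟨i, rfl⟩) (Submodule.mem_top (x := 1))
    rw [mul_one] at this
    exact this
  | mul a b ha hb =>
    rw [map_mul]
    exact ssp_mul K r L (Submodule.mul_mem_mul (ha trivial) (hb trivial))
  | add a b ha hb =>
    rw [map_add]
    exact add_mem (ha trivial) (hb trivial)

lemma top_mul_top' (K : Type*) [Field K] (r L : ℕ) :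
    (⊤ : Submodule K (TruncAlg K r L)) * ⊤ = ⊤ := by
  rw [eq_top_iff]
  intro a _
  rw [← one_mul a]
  exact Submodule.mul_mem_mul trivial trivial

lemma Jrad_eq (K : Type*) [Field K] (r L : ℕ) :
    Jrad K r L = Submodule.span K (Set.range (gen K r L)) * ⊤ := by
  unfold Jrad
  have h := ssp_eq_top K r L
  unfold ssp at h
  set V := Submodule.span K (Set.range (gen K r L))
  apply le_antisymm
  · calc ⊤ * V * ⊤ = (1 ⊔ V * ⊤) * V * ⊤ := by rw [h]
      _ ≤ V * ⊤ := by
        rw [Submodule.sup_mul, one_mul, Submodule.sup_mul]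
        refine sup_le le_rfl ?_
        rw [mul_assoc, mul_assoc]
        exact mul_le_mul_right le_top _
  · rw [mul_assoc]
    intro x hx
    rw [← one_mul x]
    exact Submodule.mul_mem_mul trivial hx

lemma mul_Jrad {K : Type*} [Field K] {r L : ℕ} (a : TruncAlg K r L) {b : TruncAlg K r L}
    (hb : b ∈ Jrad K r L) : a * b ∈ Jrad K r L := by
  have : ⊤ * Jrad K r L = Jrad K r L := by
    unfold Jrad
    rw [← mul_assoc, ← mul_assoc, top_mul_top']
  rw [← this]
  exact Submodule.mul_mem_mul trivial hb

lemma Jrad_mul {K : Type*} [Field K] {r L : ℕ} (a : TruncAlg K r L) {b : TruncAlg K r L}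
    (hb : b ∈ Jrad K r L) : b * a ∈ Jrad K r L := by
  have : Jrad K r L * ⊤ = Jrad K r L := by
    unfold Jrad
    rw [mul_assoc, top_mul_top']
  rw [← this]
  exact Submodule.mul_mem_mul hb trivial

lemma gen_mem {K : Type*} [Field K] {r L : ℕ} (i : Fin r) : gen K r L i ∈ Jrad K r L := by
  rw [Jrad_eq]
  have := Submodule.mul_mem_mul (M := Submodule.span K (Set.range (gen K r L)))
      (N := ⊤) (Submodule.subset_span ⟨i, rfl⟩) (Submodule.mem_top (x := 1))
  rwa [mul_one] at this

section
variable (K : Type*) [Field K] (r L : ℕ) (M : Type*) [AddCommGroup M] [Module K M]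
    [Module (TruncAlg K r L) M] [IsScalarTower K (TruncAlg K r L) M]

/-- multiplication by the generator -/
def xm (i : Fin r) : M →ₗ[K] M where
  toFun m := gen K r L i • m
  map_add' := smul_add _
  map_smul' k m := by
    simp only [RingHom.id_apply]
    rw [← algebraMap_smul (TruncAlg K r L) k m, ← algebraMap_smul (TruncAlg K r L) k, smul_smul,
      smul_smul, Algebra.commutes]

abbrev NN (l : ℕ) : Submodule K M := (jpow K r L M l).restrictScalars K

lemma NN_zero : NN K r L M 0 = ⊤ := by
  rw [eq_top_iff]
  intro m _
  refine Submodule.subset_span ⟨1, ?_, m, by simp⟩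
  rw [pow_zero]
  exact Submodule.one_le.mp le_rfl

lemma NN_succ (l : ℕ) : NN K r L M (l + 1) = ⨆ i, (NN K r L M l).map (xm K r L M i) := by
  have key : ∀ a ∈ Jrad K r L, ∀ n ∈ jpow K r L M l,
      a • n ∈ ⨆ i, (NN K r L M l).map (xm K r L M i) := by
    intro a ha n hn
    rw [Jrad_eq] at ha
    induction ha using Submodule.mul_induction_on' with
    | mem_mul_mem v hv c hc =>
      rw [mul_smul]
      have hcn : c • n ∈ jpow K r L M l := Submodule.smul_mem _ _ hn
      induction hv using Submodule.span_induction with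
      | mem x hx =>
        obtain ⟨i, rfl⟩ := hx
        exact Submodule.mem_iSup_of_mem i ⟨c • n, hcn, rfl⟩
      | zero => rw [zero_smul]; exact zero_mem _
      | add x y _ _ hx hy => rw [add_smul]; exact add_mem hx hy
      | smul k x _ hx => rw [smul_assoc]; exact Submodule.smul_mem _ _ hx
    | add x _ y _ hx hy => rw [add_smul]; exact add_mem hx hy
  apply le_antisymm
  · intro x hx
    replace hx : x ∈ jpow K r L M (l + 1) := hx
    unfold jpow at hx
    induction hx using Submodule.span_induction with
    | mem x hx =>
      obtain ⟨a, ha, m, rfl⟩ := hx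
      rw [pow_succ'] at ha
      induction ha using Submodule.mul_induction_on' with
      | mem_mul_mem v hv c hc =>
        rw [mul_smul]
        exact key v hv _ (Submodule.subset_span ⟨c, hc, m, rfl⟩)
      | add x _ y _ hx hy => rw [add_smul]; exact add_mem hx hy
    | zero => exact zero_mem _
    | add x y _ _ hx hy => exact add_mem hx hy
    | smul a x hx0 hx =>
      clear hx0
      induction hx using Submodule.iSup_induction' with
      | mem i x hx =>
        obtain ⟨n, hn, rfl⟩ := hx
        change a • gen K r L i • n ∈ _
        rw [smul_smul]
        exact key _ (mul_Jrad a (gen_mem i)) n hn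
      | zero => rw [smul_zero]; exact zero_mem _
      | add x y _ _ hx hy => rw [smul_add]; exact add_mem hx hy
  · refine iSup_le fun i => ?_
    rintro _ ⟨n, hn, rfl⟩
    replace hn : n ∈ jpow K r L M l := hn
    change gen K r L i • n ∈ jpow K r L M (l + 1)
    unfold jpow at hn
    suffices h : ∀ b ∈ Jrad K r L, b • n ∈ jpow K r L M (l + 1) from h _ (gen_mem i)
    induction hn using Submodule.span_induction with
    | mem x hx =>
      obtain ⟨a, ha, m, rfl⟩ := hx
      intro b hb
      rw [smul_smul]
      refine Submodule.subset_span ⟨b * a, ?_, m, rfl⟩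
      rw [pow_succ']
      exact Submodule.mul_mem_mul hb ha
    | zero => intro b _; rw [smul_zero]; exact zero_mem _
    | add x y _ _ hx hy => intro b hb; rw [smul_add]; exact add_mem (hx b hb) (hy b hb)
    | smul a x _ hx => intro b hb; rw [smul_smul]; exact hx _ (Jrad_mul a hb)

lemma NN_anti (l : ℕ) : NN K r L M (l + 1) ≤ NN K r L M l := by
  induction l with
  | zero => rw [NN_zero]; exact le_top
  | succ l ih =>
    rw [NN_succ K r L M (l + 1)]
    refine le_trans ?_ (NN_succ K r L M l).ge
    exact iSup_mono fun i => Submodule.map_mono ih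

lemma finrank_sup_map {ι : Type*} [DecidableEq ι] [FiniteDimensional K M] (s : Finset ι)
    (f : ι → M →ₗ[K] M) (C N : Submodule K M) :
    Module.finrank K ↥(s.sup (fun i => C.map (f i)) ⊔ N) ≤
      s.card * Module.finrank K C + Module.finrank K N := by
  induction s using Finset.induction_on with
  | empty => rw [Finset.sup_empty, bot_sup_eq]; simp
  | insert a s ha ih =>
    rw [Finset.sup_insert, Finset.card_insert_of_notMem ha, sup_assoc]
    have h1 := Submodule.finrank_add_le_finrank_add_finrank (C.map (f a))
      (s.sup (fun i => C.map (f i)) ⊔ N)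
    have h2 := Submodule.finrank_map_le (f a) C
    rw [add_mul]
    omega

lemma quotDim_add [FiniteDimensional K M] (p q : Submodule K M) (h : p ≤ q) :
    quotDim K M p q + Module.finrank K p = Module.finrank K q := by
  unfold quotDim
  rw [← Submodule.finrank_quotient_add_finrank (Submodule.comap q.subtype p)]
  congr 1
  exact (Submodule.comapSubtypeEquivOfLe h).finrank_eq.symm

lemma forward [FiniteDimensional K M] (l : ℕ) :
    quotDim K M (NN K r L M (l + 2)) (NN K r L M (l + 1)) ≤
      r * quotDim K M (NN K r L M (l + 1)) (NN K r L M l) := by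
  have h1 := quotDim_add K M (NN K r L M (l + 2)) _ (NN_anti K r L M (l + 1))
  have h2 := quotDim_add K M _ _ (NN_anti K r L M l)
  obtain ⟨C, hC⟩ := Submodule.exists_isCompl (Submodule.comap (NN K r L M l).subtype (NN K r L M (l+1)))
  have hCf : Module.finrank K C = quotDim K M (NN K r L M (l + 1)) (NN K r L M l) :=
    (Submodule.quotientEquivOfIsCompl _ C hC).finrank_eq.symm
  set C' := C.map (NN K r L M l).subtype with hC'
  have hC'f : Module.finrank K C' ≤ Module.finrank K C := Submodule.finrank_map_le _ _
  have hs : NN K r L M l ≤ C' ⊔ NN K r L M (l + 1) := by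
    intro x hx
    have : (⟨x, hx⟩ : NN K r L M l) ∈
      Submodule.comap (NN K r L M l).subtype (NN K r L M (l+1)) ⊔ C := by
        rw [hC.sup_eq_top]; trivial
    obtain ⟨y, hy, z, hz, hyz⟩ := Submodule.mem_sup.mp this
    refine Submodule.mem_sup.mpr ⟨z, ⟨z, hz, rfl⟩, y, hy, ?_⟩
    rw [add_comm]
    exact congrArg Subtype.val hyz
  have h3 : NN K r L M (l + 1) ≤
      (Finset.univ : Finset (Fin r)).sup (fun i => C'.map (xm K r L M i)) ⊔ NN K r L M (l + 2) := by
    conv_lhs => rw [NN_succ]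
    refine iSup_le fun i => (Submodule.map_mono hs).trans ?_
    rw [Submodule.map_sup]
    refine sup_le_sup ?_ ?_
    · exact Finset.le_sup (f := fun i => C'.map (xm K r L M i)) (Finset.mem_univ i)
    · rw [NN_succ K r L M (l + 1)]
      exact le_iSup (fun i => (NN K r L M (l+1)).map (xm K r L M i)) i
  have h4 := (Submodule.finrank_mono h3).trans (finrank_sup_map K M _ _ _ _)
  rw [Finset.card_univ, Fintype.card_fin] at h4
  have h5 : r * Module.finrank K C' ≤ r * Module.finrank K C := Nat.mul_le_mul_left _ hC'f
  rw [hCf] at h5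
  omega

end

section constr
variable (K : Type) [Field K] (r L : ℕ) (hr : 0 < r) (D : ℕ → ℕ) (hD : ∀ l, D (l + 1) ≤ r * D l)
  (hDL : ∀ l, L < l → D l = 0)

abbrev BB (D : ℕ → ℕ) : Type := {p : ℕ × ℕ // p.2 < D p.1}

include hDL in
lemma BB_finite : Finite (BB D) := by
  apply Set.Finite.to_subtype
  refine Set.Finite.subset (Set.finite_Iic ((L, ∑ l ∈ Finset.range (L+1), D l) : ℕ × ℕ)) ?_
  rintro ⟨l, j⟩ h
  have h : j < D l := h
  have hl : l ≤ L := by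
    by_contra hc
    rw [hDL l (by omega)] at h
    omega
  refine ⟨hl, ?_⟩
  have := Finset.single_le_sum (f := D) (s := Finset.range (L+1)) (fun i _ => Nat.zero_le _)
    (Finset.mem_range.mpr (by omega : l < L + 1))
  change j ≤ _
  omega

/-- value at a pair, zero outside -/
def ev (f : BB D → K) (l j : ℕ) : K := if h : j < D l then f ⟨(l, j), h⟩ else 0

/-- shift operator -/
def sh (i : Fin r) : (BB D → K) →ₗ[K] (BB D → K) where
  toFun f b := if b.1.1 = 0 then 0 else
    if b.1.2 % r = i then ev K D f (b.1.1 - 1) (b.1.2 / r) else 0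
  map_add' f g := by
    funext b
    simp only [ev, Pi.add_apply]
    split_ifs <;> simp
  map_smul' k f := by
    funext b
    simp only [ev, Pi.smul_apply, RingHom.id_apply]
    split_ifs <;> simp

/-- expected layers -/
def ZZ (l : ℕ) : Submodule K (BB D → K) where
  carrier := {f | ∀ b : BB D, b.1.1 < l → f b = 0}
  zero_mem' := fun _ _ => rfl
  add_mem' := fun {f g} hf hg b hb => by simp [hf b hb, hg b hb]
  smul_mem' := fun k f hf b hb => by simp [hf b hb]

lemma sh_mem (i : Fin r) (l : ℕ) (f : BB D → K) (hf : f ∈ ZZ K D l) :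
    sh K r D i f ∈ ZZ K D (l + 1) := by
  intro b hb
  change (if b.1.1 = 0 then 0 else
    if b.1.2 % r = i then ev K D f (b.1.1 - 1) (b.1.2 / r) else 0) = (0 : K)
  unfold ev
  split_ifs with h1 h2 h3
  · rfl
  · exact hf _ (by simp only; omega)
  · rfl
  · rfl

include hr hD in
lemma ZZ_succ (l : ℕ) : ZZ K D (l + 1) = ⨆ i, (ZZ K D l).map (sh K r D i) := by
  apply le_antisymm
  · intro f hf
    let g : Fin r → (BB D → K) := fun i b => ev K D f (b.1.1 + 1) (r * b.1.2 + i)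
    have hg : ∀ i, g i ∈ ZZ K D l := by
      intro i b hb
      simp only [g, ev]
      split_ifs with h
      · exact hf _ (by simp only; omega)
      · rfl
    have hfg : f = ∑ i, sh K r D i (g i) := by
      funext b
      rw [Finset.sum_apply]
      obtain ⟨⟨k, j⟩, h⟩ := b
      have h' : j < D k := h
      rw [Finset.sum_eq_single (⟨j % r, Nat.mod_lt _ hr⟩ : Fin r)]
      · rcases k with _ | k
        · rw [hf _ (by simp only; omega)]
          simp [sh]
        · have h2 : j / r < D k := by
            rw [Nat.div_lt_iff_lt_mul hr, mul_comm]
            exact lt_of_lt_of_le h' (hD k)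
          simp [sh, g, ev, h2, Nat.div_add_mod, h']
      · intro i _ hi
        have : j % r ≠ i := fun hh => hi (Fin.ext hh.symm)
        simp [sh, this]
      · simp
    rw [hfg]
    exact Submodule.sum_mem _ fun i _ => Submodule.mem_iSup_of_mem i ⟨g i, hg i, rfl⟩
  · refine iSup_le fun i => ?_
    rintro _ ⟨f, hf, rfl⟩
    exact sh_mem K r D i l f hf

lemma ZZ_zero : ZZ K D 0 = ⊤ := by
  rw [eq_top_iff]
  intro f _ b hb
  omega

include hDL in
lemma ZZ_last : ZZ K D (L + 1) = ⊥ := by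
  rw [eq_bot_iff]
  intro f hf
  rw [Submodule.mem_bot]
  funext b
  refine hf b ?_
  by_contra hc
  have := b.2
  rw [hDL _ (by omega)] at this
  omega

lemma quotDim_ZZ (l : ℕ) : quotDim K (BB D → K) (ZZ K D (l + 1)) (ZZ K D l) = D l := by
  let φ : ↥(ZZ K D l) →ₗ[K] (Fin (D l) → K) :=
    { toFun := fun f j => f.1 ⟨(l, j), j.2⟩
      map_add' := fun _ _ => rfl
      map_smul' := fun _ _ => rfl }
  have hs : Function.Surjective φ := by
    intro g
    refine ⟨⟨fun b => if h : b.1.1 = l then g ⟨b.1.2, h ▸ b.2⟩ else 0, ?_⟩, ?_⟩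
    · intro b hb
      simp only
      rw [dif_neg (by omega)]
    · funext j
      simp [φ]
  have hk : Submodule.comap (ZZ K D l).subtype (ZZ K D (l + 1)) = LinearMap.ker φ := by
    ext f
    rw [LinearMap.mem_ker, Submodule.mem_comap]
    constructor
    · intro h
      funext j
      exact h _ (by simp)
    · intro h b hb
      rcases Nat.lt_succ_iff_lt_or_eq.mp hb with hb | hb
      · exact f.2 b hb
      · obtain ⟨⟨k, j⟩, hj⟩ := b
        simp only at hb
        subst hb
        exact congrFun h ⟨j, hj⟩
  unfold quotDim
  rw [hk, (φ.quotKerEquivOfSurjective hs).finrank_eq]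
  simp

lemma sh_prod_mem (s : List (Fin r)) (f : BB D → K) :
    (s.map (sh K r D)).prod f ∈ ZZ K D s.length := by
  induction s with
  | nil => rw [List.length_nil, ZZ_zero]; trivial
  | cons i s ih =>
    rw [List.map_cons, List.prod_cons]
    exact sh_mem K r D i _ _ ih

include hDL in
lemma rel_zero ⦃a b : FreeAlgebra K (Fin r)⦄ (h : TruncRel K r L a b) :
    FreeAlgebra.lift K (sh K r D) a = FreeAlgebra.lift K (sh K r D) b := by
  obtain ⟨⟨f, rfl⟩, rfl⟩ := h
  rw [map_zero, map_list_prod, List.map_ofFn]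
  have : (FreeAlgebra.lift K (sh K r D) ∘ fun j => FreeAlgebra.ι K (f j)) = sh K r D ∘ f := by
    funext j
    simp
  rw [this, ← List.map_ofFn]
  ext1 g
  have := sh_prod_mem K r D (List.ofFn f) g
  rw [List.length_ofFn, ZZ_last K L D hDL, Submodule.mem_bot] at this
  exact this

/-- the representation -/
def rho : TruncAlg K r L →ₐ[K] Module.End K (BB D → K) :=
  RingQuot.liftAlgHom K ⟨FreeAlgebra.lift K (sh K r D), rel_zero K r L D hDL⟩

lemma rho_gen (i : Fin r) : rho K r L D hDL (gen K r L i) = sh K r D i := by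
  unfold rho gen
  erw [RingQuot.liftAlgHom_mkAlgHom_apply]
  simp

include hr hD hDL in
lemma backward : ∃ (M : Type) (_ : AddCommGroup M) (_ : Module K M)
        (_ : Module (TruncAlg K r L) M) (_ : IsScalarTower K (TruncAlg K r L) M)
        (_ : FiniteDimensional K M),
      ∀ l, quotDim K M (NN K r L M (l + 1)) (NN K r L M l) = D l := by
  have := BB_finite L D hDL
  let m : Module (TruncAlg K r L) (BB D → K) :=
    Module.compHom (BB D → K) (rho K r L D hDL).toRingHom
  have hsm : ∀ (a : TruncAlg K r L) (f : BB D → K), a • f = rho K r L D hDL a f := fun _ _ => rfl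
  have tw : IsScalarTower K (TruncAlg K r L) (BB D → K) := by
    constructor
    intro k a f
    rw [hsm, hsm, map_smul]
    rfl
  refine ⟨BB D → K, inferInstance, inferInstance, m, tw, inferInstance, ?_⟩
  have hx : ∀ i, xm K r L (BB D → K) i = sh K r D i := by
    intro i
    rw [← rho_gen K r L D hDL]
    rfl
  have hN : ∀ l, NN K r L (BB D → K) l = ZZ K D l := by
    intro l
    induction l with
    | zero => rw [NN_zero, ZZ_zero]
    | succ l ih =>
      rw [NN_succ, ZZ_succ K r hr D hD, ih]
      simp only [hx]
  intro l
  rw [hN, hN, quotDim_ZZ]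

end constr
end helper

/-- A tuple `(d_0,…,d_L)` is the radical layering of a finite-dimensional
`Λ`-module iff `d_l ≤ r·d_{l-1}` for all `1 ≤ l ≤ L`. -/
theorem stmt2 (K : Type) [Field K] [IsAlgClosed K] (r L : ℕ) (hr : 0 < r) (hL : 0 < L)
    (dv : Fin (L + 1) → ℕ) :
    (∃ (M : Type) (_ : AddCommGroup M) (_ : Module K M)
        (_ : Module (TruncAlg K r L) M) (_ : IsScalarTower K (TruncAlg K r L) M)
        (_ : FiniteDimensional K M),
      radLayering K r L M = dv) ↔
    (∀ l : Fin L, dv l.succ ≤ r * dv l.castSucc) := by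
  constructor
  · rintro ⟨M, _, _, _, _, _, rfl⟩ l
    exact forward K r L M l
  · intro h
    let D : ℕ → ℕ := fun l => if hl : l < L + 1 then dv ⟨l, hl⟩ else 0
    have hD : ∀ l, D (l + 1) ≤ r * D l := by
      intro l
      by_cases hl : l < L
      · have := h ⟨l, hl⟩
        have h1 : D (l + 1) = dv (Fin.succ ⟨l, hl⟩) := dif_pos (by omega)
        have h2 : D l = dv (Fin.castSucc ⟨l, hl⟩) := dif_pos (by omega)
        rw [h1, h2]
        exact this
      · have h1 : D (l + 1) = 0 := dif_neg (by omega)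
        rw [h1]
        exact Nat.zero_le _
    have hDL : ∀ l, L < l → D l = 0 := fun l hl => dif_neg (by omega)
    obtain ⟨M, i1, i2, i3, i4, i5, hM⟩ := backward K r L hr D hD hDL
    refine ⟨M, i1, i2, i3, i4, i5, ?_⟩
    funext l
    exact (hM l).trans (dif_pos l.2)
end
end
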